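/- Let (L,M,N,P,λ,λ',μ,ν,h) be a crossed square, with ∂₂ : L → M ⋊ N, ∂₂(l) = (λ(l)⁻¹, λ'(l)), ∂₁ : M ⋊ N → P, ∂₁(m,n) = μ(m)·ν(n) (N acting on M via ν) and Peiffer lifting {(m,n),(c,a)} := h(m, n·a·n⁻¹). Then axiom 2CM4 holds: for all x = (m,n) ∈ M ⋊ N and l ∈ L, {x, ∂₂(l)}·{∂₂(l), x} = (^{μ(m)·ν(n)}l)·l⁻¹ in L, where P acts on L by the given action. -/

import Mathlib

/-- A crossed square of groups `(L,M,N,P,λ,λ',μ,ν,h)`: the four maps form a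
commutative square over `P`, all of `μ`, `ν`, `μ∘λ`, `λ` (with `M` acting on `L`
via `μ`) and `λ'` (with `N` acting on `L` via `ν`) are crossed modules, `λ`, `λ'`
are `P`-equivariant, and `h : M × N → L` satisfies the usual axioms. -/
structure CrossedSquare (L M N P : Type*) [Group L] [Group M] [Group N] [Group P]
    [MulDistribMulAction P L] [MulDistribMulAction P M] [MulDistribMulAction P N] where
  lam : L →* M
  lam' : L →* N
  mu : M →* P
  nu : N →* P
  comm : ∀ l : L, mu (lam l) = nu (lam' l)
  mu_conj : ∀ (p : P) (m : M), mu (p • m) = p * mu m * p⁻¹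
  mu_peiffer : ∀ m m' : M, mu m • m' = m * m' * m⁻¹
  nu_conj : ∀ (p : P) (n : N), nu (p • n) = p * nu n * p⁻¹
  nu_peiffer : ∀ n n' : N, nu n • n' = n * n' * n⁻¹
  mulam_conj : ∀ (p : P) (l : L), mu (lam (p • l)) = p * mu (lam l) * p⁻¹
  mulam_peiffer : ∀ l l' : L, mu (lam l) • l' = l * l' * l⁻¹
  lam_conj : ∀ (m : M) (l : L), lam (mu m • l) = m * lam l * m⁻¹
  lam'_conj : ∀ (n : N) (l : L), lam' (nu n • l) = n * lam' l * n⁻¹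
  lam'_peiffer : ∀ l l' : L, nu (lam' l) • l' = l * l' * l⁻¹
  lam_equivariant : ∀ (p : P) (l : L), lam (p • l) = p • lam l
  lam'_equivariant : ∀ (p : P) (l : L), lam' (p • l) = p • lam' l
  h : M → N → L
  h_mul_left : ∀ (m m' : M) (n : N), h (m * m') n = h (mu m • m') (mu m • n) * h m n
  h_mul_right : ∀ (m : M) (n n' : N), h m (n * n') = h m n * h (nu n • m) (nu n • n')
  lam_h : ∀ (m : M) (n : N), lam (h m n) = m * (nu n • m)⁻¹
  lam'_h : ∀ (m : M) (n : N), lam' (h m n) = (mu m • n) * n⁻¹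
  h_lam : ∀ (l : L) (n : N), h (lam l) n = l * (nu n • l)⁻¹
  h_lam' : ∀ (m : M) (l : L), h m (lam' l) = (mu m • l) * l⁻¹
  h_equivariant : ∀ (p : P) (m : M) (n : N), h (p • m) (p • n) = p • h m n

/-- The Peiffer lifting `{(m,n),(c,a)} = h(m, n·a·n⁻¹)` on the mapping cone of a
crossed square. -/
def CrossedSquare.plift {L M N P : Type*} [Group L] [Group M] [Group N] [Group P]
    [MulDistribMulAction P L] [MulDistribMulAction P M] [MulDistribMulAction P N]
    (C : CrossedSquare L M N P)
    (x y : M ⋊[(MulDistribMulAction.toMulAut P M).comp C.nu] N) : L :=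
  C.h x.left (x.right * y.right * x.right⁻¹)

/-- The boundary `∂₂(l) = (λ(l)⁻¹, λ'(l))` of the mapping cone of a crossed square. -/
def CrossedSquare.cone2 {L M N P : Type*} [Group L] [Group M] [Group N] [Group P]
    [MulDistribMulAction P L] [MulDistribMulAction P M] [MulDistribMulAction P N]
    (C : CrossedSquare L M N P) (l : L) :
    M ⋊[(MulDistribMulAction.toMulAut P M).comp C.nu] N :=
  ⟨(C.lam l)⁻¹, C.lam' l⟩

/-!
Conjugation by `n` in `N` is the action of `ν(n)`, so `{x, ∂₂(l)}` is a value of `h` at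
`λ'(ⁿl)`, while in `{∂₂(l), x}` equivariance of `h` pulls the conjugation by `λ'(l)` out of
`h`. For `x = (m, n)` the two liftings become `(^{μ(m)ν(n)}l)·(ⁿl)⁻¹` and `(ⁿl)·l⁻¹`, whose
product telescopes.
-/

namespace CrossedSquare

variable {L M N P : Type*} [Group L] [Group M] [Group N] [Group P]
  [MulDistribMulAction P L] [MulDistribMulAction P M] [MulDistribMulAction P N]
  (C : CrossedSquare L M N P)

lemma nu_lam'_smul_self (l : L) : C.nu (C.lam' l) • l = l := by
  rw [C.lam'_peiffer, mul_inv_cancel_right]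

lemma nu_lam'_smul_lam_self (l : L) : C.nu (C.lam' l) • C.lam l = C.lam l := by
  rw [← C.lam_equivariant, C.nu_lam'_smul_self]

lemma h_lam_inv (l : L) (n : N) : C.h (C.lam l)⁻¹ n = l⁻¹ * C.nu n • l := by
  rw [← map_inv, C.h_lam, smul_inv', inv_inv]

lemma plift_cone2_right (x : M ⋊[(MulDistribMulAction.toMulAut P M).comp C.nu] N) (l : L) :
    C.plift x (C.cone2 l) =
      (C.mu x.left * C.nu x.right) • l * (C.nu x.right • l)⁻¹ :=
  calc C.h x.left (x.right * C.lam' l * x.right⁻¹)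
    _ = C.h x.left (C.lam' (C.nu x.right • l)) := by rw [C.lam'_conj]
    _ = (C.mu x.left * C.nu x.right) • l * (C.nu x.right • l)⁻¹ := by
      rw [C.h_lam', mul_smul]

lemma plift_cone2_left (l : L) (x : M ⋊[(MulDistribMulAction.toMulAut P M).comp C.nu] N) :
    C.plift (C.cone2 l) x = C.nu x.right • l * l⁻¹ :=
  calc C.h (C.lam l)⁻¹ (C.lam' l * x.right * (C.lam' l)⁻¹)
    _ = C.h (C.nu (C.lam' l) • (C.lam l)⁻¹) (C.nu (C.lam' l) • x.right) := by
      rw [smul_inv', C.nu_lam'_smul_lam_self, C.nu_peiffer]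
    _ = C.nu (C.lam' l) • (l⁻¹ * C.nu x.right • l) := by
      rw [C.h_equivariant, C.h_lam_inv]
    _ = C.nu x.right • l * l⁻¹ := by
      rw [C.lam'_peiffer, mul_inv_cancel_left]

end CrossedSquare

/-- Axiom 2CM4 for the mapping cone of a crossed square:
for `x = (m,n)` and `l ∈ L`, `{x, ∂₂(l)}·{∂₂(l), x} = (^{μ(m)·ν(n)}l)·l⁻¹`. -/
theorem mapping_cone_2CM4 {L M N P : Type*} [Group L] [Group M] [Group N] [Group P]
    [MulDistribMulAction P L] [MulDistribMulAction P M] [MulDistribMulAction P N]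
    (C : CrossedSquare L M N P) (m : M) (n : N) (l : L) :
    C.plift (⟨m, n⟩ : M ⋊[(MulDistribMulAction.toMulAut P M).comp C.nu] N) (C.cone2 l) *
      C.plift (C.cone2 l) (⟨m, n⟩ : M ⋊[(MulDistribMulAction.toMulAut P M).comp C.nu] N) =
      ((C.mu m * C.nu n) • l) * l⁻¹ := by
  rw [C.plift_cone2_right, C.plift_cone2_left, ← mul_assoc, inv_mul_cancel_right]
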